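/- arXiv:0805.0330 — 3 statements merged into one kernel-verified Lean document; each statement's English description precedes it below -/
import Mathlib

section
/- For every ATRA₁ 𝒜 with alphabet Σ, the safety and co-safety modes are dual: a data tree τ with alphabet Σ belongs to L^cos(𝒜̄) if and only if τ does not belong to L^saf(𝒜); consequently τ belongs to L^saf(𝒜̄) if and only if τ does not belong to L^cos(𝒜). -/
/-! ## Trees and data trees -/

abbrev Node : Type := List Bool

/-- A (possibly infinite) data tree over alphabet `A`, with data from `ℕ`.
It is represented by the partial labelling functions on nonleaf nodes:
`label n = some a` iff `n` is a nonleaf node labelled `a`, and similarly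
`dlabel` gives the datum at each nonleaf node. -/
structure DataTree (A : Type) where
  label : Node → Option A
  dlabel : Node → Option ℕ
  root_nonleaf : (label []).isSome
  domain_eq : ∀ n : Node, (dlabel n).isSome ↔ (label n).isSome
  tree_cond : ∀ (n : Node) (d : Bool), (label (n ++ [d])).isSome → (label n).isSome

namespace DataTree
variable {A : Type}

def Nonleaf (τ : DataTree A) (n : Node) : Prop := (τ.label n).isSome

/-- The set of nodes: the root together with both children of every nonleaf node. -/
def Nodes (τ : DataTree A) : Set Node :=
  {n | n = [] ∨ ∃ m d, n = m ++ [d] ∧ τ.Nonleaf m}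

def Leaf (τ : DataTree A) (n : Node) : Prop := n ∈ τ.Nodes ∧ ¬ τ.Nonleaf n

def Finite (τ : DataTree A) : Prop := {n | τ.Nonleaf n}.Finite

end DataTree

/-- A (possibly infinite) tree over alphabet `A` (a data tree without data). -/
structure BTree (A : Type) where
  label : Node → Option A
  root_nonleaf : (label []).isSome
  tree_cond : ∀ (n : Node) (d : Bool), (label (n ++ [d])).isSome → (label n).isSome

namespace BTree
variable {A : Type}
def Nonleaf (t : BTree A) (n : Node) : Prop := (t.label n).isSome
def Nodes (t : BTree A) : Set Node :=
  {n | n = [] ∨ ∃ m d, n = m ++ [d] ∧ t.Nonleaf m}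
def Leaf (t : BTree A) (n : Node) : Prop := n ∈ t.Nodes ∧ ¬ t.Nonleaf n
def Finite (t : BTree A) : Prop := {n | t.Nonleaf n}.Finite
end BTree

/-- The underlying tree of a data tree (erasing the data). -/
def DataTree.toTree {A : Type} (τ : DataTree A) : BTree A :=
  ⟨τ.label, τ.root_nonleaf, τ.tree_cond⟩

/-- `τ` and `τ'` have equal `l`-prefixes: they agree on all nodes of length `< l`
(hence their restrictions to nodes of length `≤ l` coincide). -/
def EqPrefix {A : Type} (τ τ' : DataTree A) (l : ℕ) : Prop :=
  ∀ n : Node, n.length < l → τ.label n = τ'.label n ∧ τ.dlabel n = τ'.dlabel n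

open Classical in
/-- The distance between data trees: `0` if they are equal, and otherwise `1/l`
where `l` is least such that the `l`-prefixes are distinct. -/
noncomputable def treeDist {A : Type} (τ τ' : DataTree A) : ℝ :=
  if τ = τ' then 0 else ((sInf {l : ℕ | ¬ EqPrefix τ τ' l} : ℕ) : ℝ)⁻¹

/-! ## Forward alternating tree 1-register automata (ATRA₁) -/

/-- Positive Boolean formulae over `Q`: atoms `q(d, ↓)` / `q(d, ¬↓)` are
`atom q d true` / `atom q d false`, where `d : Bool` is the direction. -/
inductive PosBool (Q : Type) : Type
  | atom : Q → Bool → Bool → PosBool Q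
  | tt : PosBool Q
  | ff : PosBool Q
  | and : PosBool Q → PosBool Q → PosBool Q
  | or : PosBool Q → PosBool Q → PosBool Q

/-- Satisfaction of a positive Boolean formula by a quadruple
`R d u` of subsets of `Q` (`d` = direction, `u = true` means register update `↓`). -/
def PosBool.Sat {Q : Type} (R : Bool → Bool → Set Q) : PosBool Q → Prop
  | .atom q d u => q ∈ R d u
  | .tt => True
  | .ff => False
  | .and φ ψ => φ.Sat R ∧ ψ.Sat R
  | .or φ ψ => φ.Sat R ∨ ψ.Sat R

/-- The dual of a positive Boolean formula: swaps `⊤`/`⊥` and `∧`/`∨`. -/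
def PosBool.dual {Q : Type} : PosBool Q → PosBool Q
  | .atom q d u => .atom q d u
  | .tt => .ff
  | .ff => .tt
  | .and φ ψ => .or φ.dual ψ.dual
  | .or φ ψ => .and φ.dual ψ.dual

def PosBool.map {Q Q' : Type} (f : Q → Q') : PosBool Q → PosBool Q'
  | .atom q d u => .atom (f q) d u
  | .tt => .tt
  | .ff => .ff
  | .and φ ψ => .and (φ.map f) (ψ.map f)
  | .or φ ψ => .or (φ.map f) (ψ.map f)

/-- A forward alternating tree 1-register automaton. -/
structure ATRA (A : Type) where
  Q : Type
  fin : Finite Q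
  qI : Q
  F : Set Q
  δ : Q → A → Bool → PosBool Q

namespace ATRA
variable {A : Type}

/-- The transition relation between configurations (finite sets of threads),
relative to a letter `a` and a datum `E`. -/
def Trans (M : ATRA A) (a : A) (E : ℕ) (G H0 H1 : Set (M.Q × ℕ)) : Prop :=
  ∀ q D, (q, D) ∈ G →
    ∃ R : Bool → Bool → Set M.Q,
      (M.δ q a (decide (D = E))).Sat R ∧
      ∀ d : Bool,
        (∀ r ∈ R d true, (r, E) ∈ (if d then H1 else H0)) ∧
        (∀ r ∈ R d false, (r, D) ∈ (if d then H1 else H0))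

/-- A run of `M` on a data tree `τ`. -/
structure Run (M : ATRA A) (τ : DataTree A) where
  G : Node → Set (M.Q × ℕ)
  finite : ∀ n : Node, (G n).Finite
  support : ∀ n : Node, n ∉ τ.Nodes → G n = ∅
  init : ∃ D : ℕ, τ.dlabel [] = some D ∧ (M.qI, D) ∈ G []
  step : ∀ (n : Node) (a : A) (D : ℕ), τ.label n = some a → τ.dlabel n = some D →
    M.Trans a D (G n) (G (n ++ [false])) (G (n ++ [true]))

def Run.Final {M : ATRA A} {τ : DataTree A} (ρ : M.Run τ) : Prop :=
  ∀ n, τ.Leaf n → ∀ q D, (q, D) ∈ ρ.G n → q ∈ M.F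

def Run.FiniteRun {M : ATRA A} {τ : DataTree A} (ρ : M.Run τ) : Prop :=
  ∃ l : ℕ, ∀ n : Node, l ≤ n.length → ρ.G n = ∅

/-- The language of `M` over finite data trees. -/
def Lfin (M : ATRA A) : Set (DataTree A) :=
  {τ | τ.Finite ∧ ∃ ρ : M.Run τ, ρ.Final}

/-- The safety language of `M`: data trees on which `M` has a final run. -/
def Lsaf (M : ATRA A) : Set (DataTree A) :=
  {τ | ∃ ρ : M.Run τ, ρ.Final}

/-- The co-safety language of `M`: data trees on which `M` has a final finite run. -/
def Lcos (M : ATRA A) : Set (DataTree A) :=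
  {τ | ∃ ρ : M.Run τ, ρ.Final ∧ ρ.FiniteRun}

/-- The dual automaton: final states complemented, transition formulae dualised. -/
def dual (M : ATRA A) : ATRA A :=
  ⟨M.Q, M.fin, M.qI, M.Fᶜ, fun q a b => (M.δ q a b).dual⟩

end ATRA

/-!
Write `step` for the monotone operator on assignments of sets of threads to nodes which sends `K`
to the threads that are accepted when exactly the threads of `K` are accepted at the children.
Final runs are, up to discarding superfluous threads, the postfixed points of `step`, so the safety
mode is membership of the initial thread in the greatest fixed point. As satisfaction of a positive
Boolean formula only involves finitely many atoms, `step` is ω-continuous, so its least fixed point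
is the union of the iterates `step^k ∅`. A thread of `step^k ∅` has a run that dies out within `k`
levels, so the co-safety mode is membership in the least fixed point. Dualising the automaton
conjugates `step` by complementation, which exchanges the two fixed points.
-/

theorem lfp_eq_compl_gfp {α : Type*} [CompleteBooleanAlgebra α] {f g : α →o α}
    (h : ∀ a, g aᶜ = (f a)ᶜ) : g.lfp = f.gfpᶜ := by
  apply le_antisymm
  · apply g.lfp_le
    rw [h, f.map_gfp]
  · rw [compl_le_iff_compl_le]
    apply f.le_gfp
    rw [← compl_le_compl_iff_le, ← h, compl_compl, g.map_lfp]

open OmegaCompletePartialOrder in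
theorem ωScottContinuous_of_map_iSup {α β : Type*} [CompleteLattice α] [CompleteLattice β]
    {f : α →o β} (h : ∀ c : Chain α, f (⨆ i, c i) = ⨆ i, f (c i)) : ωScottContinuous f := by
  refine ωScottContinuous.of_map_ωSup_of_orderHom fun c => ?_
  rw [← ωSup_eq_of_isLUB isLUB_iSup, h]
  exact ωSup_eq_of_isLUB isLUB_iSup

namespace PosBool

variable {Q : Type}

theorem Sat.mono {R R' : Bool → Bool → Set Q} (h : R ≤ R') {φ : PosBool Q} (hφ : φ.Sat R) :
    φ.Sat R' := by
  induction φ with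
  | atom q d u => exact h d u hφ
  | tt => trivial
  | ff => exact hφ
  | and φ ψ ihφ ihψ => exact ⟨ihφ hφ.1, ihψ hφ.2⟩
  | or φ ψ ihφ ihψ => exact hφ.imp ihφ ihψ

theorem sat_iSup_of_directed {ι : Type*} [Nonempty ι] {R : ι → Bool → Bool → Set Q}
    (hR : Directed (· ≤ ·) R) (φ : PosBool Q) : φ.Sat (⨆ i, R i) ↔ ∃ i, φ.Sat (R i) := by
  refine ⟨fun hφ => ?_, fun ⟨i, hi⟩ => hi.mono (le_iSup R i)⟩
  induction φ with
  | atom q d u => simpa only [Sat, iSup_apply, Set.iSup_eq_iUnion, Set.mem_iUnion] using hφ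
  | tt => exact ⟨Classical.arbitrary ι, trivial⟩
  | ff => exact hφ.elim
  | and φ ψ ihφ ihψ =>
    obtain ⟨i, hi⟩ := ihφ hφ.1
    obtain ⟨j, hj⟩ := ihψ hφ.2
    obtain ⟨k, hik, hjk⟩ := hR i j
    exact ⟨k, hi.mono hik, hj.mono hjk⟩
  | or φ ψ ihφ ihψ =>
    exact hφ.elim (fun h => (ihφ h).imp fun _ => Or.inl) (fun h => (ihψ h).imp fun _ => Or.inr)

theorem sat_dual_compl (R : Bool → Bool → Set Q) (φ : PosBool Q) :
    φ.dual.Sat Rᶜ ↔ ¬ φ.Sat R := by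
  induction φ with
  | atom q d u => rfl
  | tt => exact not_true.symm
  | ff => exact not_false_iff.symm
  | and φ ψ ihφ ihψ => exact (or_congr ihφ ihψ).trans not_and_or.symm
  | or φ ψ ihφ ihψ => exact (and_congr ihφ ihψ).trans not_or.symm

theorem dual_dual (φ : PosBool Q) : φ.dual.dual = φ := by
  induction φ with
  | atom | tt | ff => rfl
  | and φ ψ ihφ ihψ | or φ ψ ihφ ihψ => simp only [dual, ihφ, ihψ]

end PosBool

namespace DataTree

variable {A : Type}

theorem Nonleaf.exists_labels {τ : DataTree A} {n : Node} (hn : τ.Nonleaf n) :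
    ∃ a E, τ.label n = some a ∧ τ.dlabel n = some E := by
  obtain ⟨a, ha⟩ := Option.isSome_iff_exists.1 hn
  obtain ⟨E, hE⟩ := Option.isSome_iff_exists.1 ((τ.domain_eq n).2 hn)
  exact ⟨a, E, ha, hE⟩

variable (τ : DataTree A)

/-- The data of the nonleaf nodes on the path from the root to `n`, including `n` itself. They
include the register values of all threads of a run at `n` that stem from the initial thread. -/
def pathData (n : Node) : Set ℕ :=
  {E | ∃ m, m <+: n ∧ τ.dlabel m = some E}

theorem finite_pathData (n : Node) : (τ.pathData n).Finite := by
  refine (List.finite_toSet (n.inits.filterMap τ.dlabel)).subset ?_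
  rintro E ⟨m, hmn, hE⟩
  exact List.mem_filterMap.2 ⟨m, (List.mem_inits _ _).2 hmn, hE⟩

theorem pathData_subset_append (n m : Node) : τ.pathData n ⊆ τ.pathData (n ++ m) :=
  fun _ ⟨k, hkn, hE⟩ => ⟨k, hkn.trans (List.prefix_append n m), hE⟩

end DataTree

/-- The largest quadruple of sets of states whose threads, issued by a thread with register value
`D` at a node with datum `E`, all lie in `K d` for the respective direction `d`. -/
def quadrupleOf {Q : Type} (K : Bool → Set (Q × ℕ)) (D E : ℕ) : Bool → Bool → Set Q :=
  fun d u => {r | (r, if u then E else D) ∈ K d}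

theorem monotone_quadrupleOf {Q : Type} (D E : ℕ) :
    Monotone fun K : Bool → Set (Q × ℕ) => quadrupleOf K D E :=
  fun _ _ h d _ _ hr => h d hr

theorem quadrupleOf_iSup {Q : Type} {ι : Type*} (K : ι → Bool → Set (Q × ℕ)) (D E : ℕ) :
    quadrupleOf (⨆ i, K i) D E = ⨆ i, quadrupleOf (K i) D E := by
  ext d u r
  simp only [quadrupleOf, iSup_apply, Set.iSup_eq_iUnion, Set.mem_iUnion, Set.mem_ofPred_eq]

namespace ATRA

variable {A : Type}

theorem dual_dual (M : ATRA A) : M.dual.dual = M :=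
  congrArg₂ (ATRA.mk M.Q M.fin M.qI) (compl_compl M.F) (funext₃ fun _ _ _ => PosBool.dual_dual _)

theorem trans_iff {M : ATRA A} {a : A} {E : ℕ} {G : Set (M.Q × ℕ)}
    {K : Bool → Set (M.Q × ℕ)} :
    M.Trans a E G (K false) (K true) ↔
      ∀ q D, (q, D) ∈ G → (M.δ q a (decide (D = E))).Sat (quadrupleOf K D E) := by
  refine forall₃_congr fun q D _ => ⟨fun ⟨R, hR, hRK⟩ => hR.mono ?_, fun h => ⟨_, h, ?_⟩⟩
  · rintro (_ | _) (_ | _) r hr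
    exacts [(hRK false).2 r hr, (hRK false).1 r hr, (hRK true).2 r hr, (hRK true).1 r hr]
  · rintro (_ | _) <;> exact ⟨fun _ hr => hr, fun _ hr => hr⟩

section AcceptedAt

variable (M : ATRA A) (τ : DataTree A) (n : Node)

/-- The threads that `M` accepts at the node `n` of `τ`, provided that it accepts the threads of
`K d` at the child of `n` in direction `d`. By `DataTree.domain_eq`, the second case of the match
is that `n` is not a nonleaf node. -/
def acceptedAt (K : Bool → Set (M.Q × ℕ)) : Set (M.Q × ℕ) :=
  {x | match τ.label n, τ.dlabel n with
    | some a, some E => (M.δ x.1 a (decide (x.2 = E))).Sat (quadrupleOf K x.2 E)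
    | _, _ => x.1 ∈ M.F}

variable {M τ n}

theorem mem_acceptedAt_of_label_eq_some {a : A} {E : ℕ} (ha : τ.label n = some a)
    (hE : τ.dlabel n = some E) {K : Bool → Set (M.Q × ℕ)} {q : M.Q} {D : ℕ} :
    (q, D) ∈ M.acceptedAt τ n K ↔ (M.δ q a (decide (D = E))).Sat (quadrupleOf K D E) := by
  simp only [acceptedAt, ha, hE, Set.mem_ofPred_eq]

theorem mem_acceptedAt_of_not_nonleaf (hn : ¬ τ.Nonleaf n) {K : Bool → Set (M.Q × ℕ)}
    {q : M.Q} {D : ℕ} : (q, D) ∈ M.acceptedAt τ n K ↔ q ∈ M.F := by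
  simp only [acceptedAt, Option.not_isSome_iff_eq_none.1 hn, Set.mem_ofPred_eq]

variable (M τ n)

theorem monotone_acceptedAt : Monotone (M.acceptedAt τ n) := by
  rintro K L hKL ⟨q, D⟩ hx
  by_cases hn : τ.Nonleaf n
  · obtain ⟨a, E, ha, hE⟩ := hn.exists_labels
    rw [mem_acceptedAt_of_label_eq_some ha hE] at hx ⊢
    exact hx.mono (monotone_quadrupleOf D E hKL)
  · rwa [mem_acceptedAt_of_not_nonleaf hn] at hx ⊢

theorem acceptedAt_iSup_of_directed {ι : Type*} [Nonempty ι] {K : ι → Bool → Set (M.Q × ℕ)}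
    (hK : Directed (· ≤ ·) K) : M.acceptedAt τ n (⨆ i, K i) = ⋃ i, M.acceptedAt τ n (K i) := by
  ext ⟨q, D⟩
  rw [Set.mem_iUnion]
  by_cases hn : τ.Nonleaf n
  · obtain ⟨a, E, ha, hE⟩ := hn.exists_labels
    simp only [mem_acceptedAt_of_label_eq_some ha hE, quadrupleOf_iSup]
    exact PosBool.sat_iSup_of_directed (hK.mono_comp _ (monotone_quadrupleOf D E)) _
  · simp only [mem_acceptedAt_of_not_nonleaf hn, exists_const]

theorem acceptedAt_dual_compl (K : Bool → Set (M.Q × ℕ)) :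
    M.dual.acceptedAt τ n Kᶜ = (M.acceptedAt τ n K)ᶜ := by
  refine Set.ext fun ⟨q, D⟩ => ?_
  by_cases hn : τ.Nonleaf n
  · obtain ⟨a, E, ha, hE⟩ := hn.exists_labels
    exact (mem_acceptedAt_of_label_eq_some ha hE).trans <|
      (PosBool.sat_dual_compl (quadrupleOf K D E) _).trans
        (mem_acceptedAt_of_label_eq_some ha hE).not.symm
  · exact (mem_acceptedAt_of_not_nonleaf hn).trans (mem_acceptedAt_of_not_nonleaf hn).not.symm

end AcceptedAt

section AcceptStep

variable (M : ATRA A) (τ : DataTree A)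

/-- The operator on assignments of sets of threads to nodes that applies `ATRA.acceptedAt` at every
node. Its fixed points describe acceptance: the greatest one in the safety mode, the least one in
the co-safety mode. -/
def acceptStep : (Node → Set (M.Q × ℕ)) →o (Node → Set (M.Q × ℕ)) where
  toFun K n := M.acceptedAt τ n fun d => K (n ++ [d])
  monotone' _ _ h n := M.monotone_acceptedAt τ n fun _ => h _

theorem ωScottContinuous_acceptStep :
    OmegaCompletePartialOrder.ωScottContinuous (M.acceptStep τ) := by
  refine ωScottContinuous_of_map_iSup fun c => funext fun n => ?_
  have directed_children : Directed (· ≤ ·) fun i d => c i (n ++ [d]) :=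
    Monotone.directed_le fun _ _ hij d => c.monotone hij (n ++ [d])
  have children_iSup : (fun d => (⨆ i, c i) (n ++ [d])) = ⨆ i, fun d => c i (n ++ [d]) := by
    funext d
    simp only [iSup_apply]
  calc M.acceptStep τ (⨆ i, c i) n
      = M.acceptedAt τ n (⨆ i, fun d => c i (n ++ [d])) :=
        congrArg (M.acceptedAt τ n) children_iSup
    _ = ⋃ i, M.acceptStep τ (c i) n := M.acceptedAt_iSup_of_directed τ n directed_children
    _ = (⨆ i, M.acceptStep τ (c i)) n := iSup_apply.symm

theorem acceptStep_dual_compl (K : Node → Set (M.Q × ℕ)) :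
    M.dual.acceptStep τ Kᶜ = (M.acceptStep τ K)ᶜ :=
  funext fun n => M.acceptedAt_dual_compl τ n fun d => K (n ++ [d])

theorem lfp_acceptStep_dual : (M.dual.acceptStep τ).lfp = (M.acceptStep τ).gfpᶜ :=
  lfp_eq_compl_gfp (M.acceptStep_dual_compl τ)

end AcceptStep

section Runs

variable {M : ATRA A} {τ : DataTree A}

theorem Run.initial_mem (ρ : M.Run τ) {D₀ : ℕ} (hD₀ : τ.dlabel [] = some D₀) :
    (M.qI, D₀) ∈ ρ.G [] := by
  obtain ⟨D, hD, hinit⟩ := ρ.init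
  rwa [Option.some_injective _ (hD₀.symm.trans hD)]

theorem Run.Final.le_acceptStep {ρ : M.Run τ} (hρ : ρ.Final) : ρ.G ≤ M.acceptStep τ ρ.G := by
  rintro n ⟨q, D⟩ hx
  by_cases hn : τ.Nonleaf n
  · obtain ⟨a, E, ha, hE⟩ := hn.exists_labels
    refine (mem_acceptedAt_of_label_eq_some ha hE).2 ?_
    exact trans_iff.1 (ρ.step n a E ha hE) q D hx
  · have mem_nodes : n ∈ τ.Nodes := by
      by_contra hn'
      simp only [ρ.support n hn', Set.mem_empty_iff_false] at hx
    exact (mem_acceptedAt_of_not_nonleaf hn).2 (hρ n ⟨mem_nodes, hn⟩ q D hx)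

/- A postfixed point need not consist of finite configurations; it becomes a run once it is
restricted to the nodes of `τ` and to the data that can occur in registers. -/
theorem exists_final_run_of_le_acceptStep {K : Node → Set (M.Q × ℕ)} (hK : K ≤ M.acceptStep τ K)
    {D₀ : ℕ} (hD₀ : τ.dlabel [] = some D₀) (hroot : (M.qI, D₀) ∈ K []) :
    ∃ ρ : M.Run τ, ρ.Final ∧ ρ.G ≤ K := by
  let G (n : Node) : Set (M.Q × ℕ) := {x | n ∈ τ.Nodes ∧ x.2 ∈ τ.pathData n ∧ x ∈ K n}
  let ρ : M.Run τ :=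
    { G
      finite n :=
        have := M.fin
        (Set.finite_univ.prod (τ.finite_pathData n)).subset fun x hx => ⟨trivial, hx.2.1⟩
      support n hn := Set.eq_empty_of_forall_notMem fun _ hx => hn hx.1
      init := ⟨D₀, hD₀, .inl rfl, ⟨[], List.prefix_rfl, hD₀⟩, hroot⟩
      step n a E ha hE := (trans_iff (K := fun d => G (n ++ [d]))).2 fun q D ⟨_, hD, hx⟩ => by
        have child_mem_nodes (d : Bool) : n ++ [d] ∈ τ.Nodes :=
          .inr ⟨n, d, rfl, Option.isSome_of_eq_some ha⟩
        have hE' : E ∈ τ.pathData n := ⟨n, List.prefix_rfl, hE⟩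
        refine ((mem_acceptedAt_of_label_eq_some ha hE).1 (hK n hx)).mono fun d u r hr => ?_
        refine ⟨child_mem_nodes d, τ.pathData_subset_append n [d] ?_, hr⟩
        cases u
        exacts [hD, hE'] }
  exact ⟨ρ, fun n hn q D hx => (mem_acceptedAt_of_not_nonleaf hn.2).1 (hK n hx.2.2),
    fun _ _ hx => hx.2.2⟩

theorem mem_Lsaf_iff {D₀ : ℕ} (hD₀ : τ.dlabel [] = some D₀) :
    τ ∈ M.Lsaf ↔ (M.qI, D₀) ∈ (M.acceptStep τ).gfp [] := by
  constructor
  · rintro ⟨ρ, hρ⟩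
    exact (M.acceptStep τ).le_gfp hρ.le_acceptStep [] (ρ.initial_mem hD₀)
  · intro hroot
    obtain ⟨ρ, hρ, -⟩ :=
      exists_final_run_of_le_acceptStep (M.acceptStep τ).map_gfp.ge hD₀ hroot
    exact ⟨ρ, hρ⟩

theorem Run.FiniteRun.le_lfp_acceptStep {ρ : M.Run τ} (hfin : ρ.FiniteRun) (hρ : ρ.Final) :
    ρ.G ≤ (M.acceptStep τ).lfp := by
  obtain ⟨l, hl⟩ := hfin
  suffices ∀ k n, l ≤ n.length + k → ρ.G n ⊆ (M.acceptStep τ).lfp n from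
    fun n => this l n (Nat.le_add_left l _)
  intro k
  induction k with
  | zero => exact fun n hn => (hl n hn).le.trans (Set.empty_subset _)
  | succ k ih =>
    intro n hn
    rw [← (M.acceptStep τ).map_lfp]
    refine (hρ.le_acceptStep n).trans (M.monotone_acceptedAt τ n fun d => ih _ ?_)
    rw [List.length_append, List.length_singleton]
    omega

/- The node `n` gets the iterate of index `k - n.length`, a truncated subtraction: from level `k`
on this is the empty assignment. -/
theorem iterate_acceptStep_le_acceptStep (k : ℕ) :
    (fun n => (M.acceptStep τ)^[k - n.length] ⊥ n) ≤
      M.acceptStep τ fun n => (M.acceptStep τ)^[k - n.length] ⊥ n := by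
  intro n
  dsimp only
  rcases hj : k - n.length with _ | j
  · exact Set.empty_subset _
  · rw [Function.iterate_succ_apply']
    refine M.monotone_acceptedAt τ n fun d => ?_
    have child_index : k - (n ++ [d]).length = j := by
      rw [List.length_append, List.length_singleton]
      omega
    simp only [child_index, subset_rfl]

theorem mem_Lcos_iff {D₀ : ℕ} (hD₀ : τ.dlabel [] = some D₀) :
    τ ∈ M.Lcos ↔ (M.qI, D₀) ∈ (M.acceptStep τ).lfp [] := by
  constructor
  · rintro ⟨ρ, hρ, hfin⟩
    exact hfin.le_lfp_acceptStep hρ [] (ρ.initial_mem hD₀)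
  · rw [fixedPoints.lfp_eq_sSup_iterate _ (M.ωScottContinuous_acceptStep τ)]
    simp only [iSup_apply, Set.iSup_eq_iUnion, Set.mem_iUnion]
    rintro ⟨k, hk⟩
    obtain ⟨ρ, hρ, hle⟩ :=
      exists_final_run_of_le_acceptStep (iterate_acceptStep_le_acceptStep k) hD₀ hk
    refine ⟨ρ, hρ, k, fun n hn => Set.subset_empty_iff.1 ((hle n).trans ?_)⟩
    dsimp only
    rw [Nat.sub_eq_zero_of_le hn]
    exact subset_rfl

theorem mem_Lcos_dual_iff : τ ∈ M.dual.Lcos ↔ τ ∉ M.Lsaf := by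
  obtain ⟨-, D₀, -, hD₀⟩ := DataTree.Nonleaf.exists_labels τ.root_nonleaf
  rw [mem_Lcos_iff hD₀, mem_Lsaf_iff hD₀, lfp_acceptStep_dual]
  rfl

theorem mem_Lsaf_dual_iff : τ ∈ M.dual.Lsaf ↔ τ ∉ M.Lcos := by
  rw [iff_not_comm, ← mem_Lcos_dual_iff, dual_dual]

end Runs

end ATRA

theorem atra_dual_saf_cos_general {A : Type} (M : ATRA A) (τ : DataTree A) :
    (τ ∈ M.dual.Lcos ↔ τ ∉ M.Lsaf) ∧ (τ ∈ M.dual.Lsaf ↔ τ ∉ M.Lcos) :=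
  ⟨ATRA.mem_Lcos_dual_iff, ATRA.mem_Lsaf_dual_iff⟩

/-- Safety and co-safety modes are dual: `τ ∈ L^cos(𝒜̄)` iff
`τ ∉ L^saf(𝒜)`, and consequently `τ ∈ L^saf(𝒜̄)` iff `τ ∉ L^cos(𝒜)`. -/
theorem atra_dual_saf_cos {A : Type} [Fintype A] (M : ATRA A) (τ : DataTree A) :
    (τ ∈ M.dual.Lcos ↔ τ ∉ M.Lsaf) ∧ (τ ∈ M.dual.Lsaf ↔ τ ∉ M.Lcos) :=
  atra_dual_saf_cos_general M τ
end

section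
/- For every ITCA 𝒞, the quasi-order ≼ on levels is strongly downward-compatible with the level transition relation →: whenever 𝒢 ≼ ℋ and ℋ → ℋ', there exists a level 𝒢' such that 𝒢 → 𝒢' and 𝒢' ≼ ℋ'. -/
/-! ## Counters with incrementing errors -/

/-- A counter valuation on `k` counters. -/
abbrev Val (k : ℕ) : Type := Fin k → ℕ

/-- Pointwise order on counter valuations. -/
def ValLE {k : ℕ} (v w : Val k) : Prop := ∀ c, v c ≤ w c

/-- Instructions over `k` counters: increment, decrement, zero-test. -/
inductive Instr (k : ℕ) : Type
  | inc : Fin k → Instr k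
  | dec : Fin k → Instr k
  | ifz : Fin k → Instr k

/-- Error-free steps. -/
def StepExact {k : ℕ} : Instr k → Val k → Val k → Prop
  | .inc c, v, v' => v' = Function.update v c (v c + 1)
  | .dec c, v, v' => 0 < v c ∧ v' = Function.update v c (v c - 1)
  | .ifz c, v, v' => v c = 0 ∧ v' = v

/-- Steps with incrementing errors. -/
def StepErr {k : ℕ} (l : Instr k) (v v' : Val k) : Prop :=
  ∃ vs vs', ValLE v vs ∧ StepExact l vs vs' ∧ ValLE vs' v'

/-- Lazy steps: either error-free, or a decrement of `0` erroneously yields `0`. -/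
def StepLazy {k : ℕ} (l : Instr k) (v v' : Val k) : Prop :=
  StepExact l v v' ∨ ∃ c, l = Instr.dec c ∧ v c = 0 ∧ v' = v

/-! ## Incrementing tree counter automata (ITCA) -/

/-- A forward incrementing tree counter automaton with ε-transitions. -/
structure ITCA (A : Type) where
  Q : Type
  fin : Finite Q
  qI : Q
  F : Set Q
  k : ℕ
  δ : Set (Q × A × Instr k × Q × Q)
  δε : Set (Q × Instr k × Q)

namespace ITCA
variable {A : Type}

/-- A run of `C` on a finite tree: a block (nonempty sequence of configurations,
consecutive ones related by ε-transitions with incrementing errors) at each node. -/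
structure Run (C : ITCA A) (t : BTree A) where
  B : Node → List (C.Q × Val C.k)
  nonempty : ∀ n ∈ t.Nodes, B n ≠ []
  block : ∀ n ∈ t.Nodes,
    List.Chain' (fun x y => ∃ l, (x.1, l, y.1) ∈ C.δε ∧ StepErr l x.2 y.2) (B n)
  init : (B []).head? = some (C.qI, fun _ => 0)
  step : ∀ (n : Node) (a : A), t.label n = some a →
    ∃ q v l r0 r1 w0 w1,
      (B n).getLast? = some (q, v) ∧
      (q, a, l, r0, r1) ∈ C.δ ∧
      StepErr l v w0 ∧ StepErr l v w1 ∧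
      (B (n ++ [false])).head? = some (r0, w0) ∧
      (B (n ++ [true])).head? = some (r1, w1)

def Run.Accepting {C : ITCA A} {t : BTree A} (ρ : C.Run t) : Prop :=
  ∀ n, t.Leaf n → ∀ q v, (ρ.B n).getLast? = some (q, v) → q ∈ C.F

/-- The language of `C`: finite trees on which `C` has an accepting run. -/
def Lang (C : ITCA A) : Set (BTree A) :=
  {t | t.Finite ∧ ∃ ρ : C.Run t, ρ.Accepting}

/-- The transition relation between levels (finite sets of configurations):
each non-final configuration is replaced by the configuration(s) some firable
transition yields lazily, and final configurations are removed. -/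
def LevelStep (C : ITCA A) (G G' : Set (C.Q × Val C.k)) : Prop :=
  ∃ f : C.Q × Val C.k → Set (C.Q × Val C.k),
    (∀ x ∈ G, x.1 ∉ C.F →
      (∃ a l r0 r1 w0 w1, (x.1, a, l, r0, r1) ∈ C.δ ∧
        StepLazy l x.2 w0 ∧ StepLazy l x.2 w1 ∧ f x = {(r0, w0), (r1, w1)}) ∨
      (∃ l r w, (x.1, l, r) ∈ C.δε ∧ StepLazy l x.2 w ∧ f x = {(r, w)})) ∧
    G' = ⋃ x ∈ {y ∈ G | y.1 ∉ C.F}, f x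

end ITCA

/-- The quasi-order on levels: each configuration of `G` is dominated
(same state, pointwise smaller-or-equal valuation) by some configuration of `H`. -/
def LevelLE {Q : Type} {k : ℕ} (G H : Set (Q × Val k)) : Prop :=
  ∀ x ∈ G, ∃ y ∈ H, x.1 = y.1 ∧ ValLE x.2 y.2

/-!
A lazy decrement sends `v c` to the truncated difference `v c - 1`, so every instruction acts as a
monotone partial map on valuations, defined on a downward closed set. A transition fired by a
configuration of `ℋ` can therefore be copied by each configuration of `𝒢` below it.
-/

theorem stepLazy_inc_iff {k : ℕ} {c : Fin k} {v v' : Val k} :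
    StepLazy (.inc c) v v' ↔ v' = Function.update v c (v c + 1) := by
  simp [StepLazy, StepExact]

theorem stepLazy_dec_iff {k : ℕ} {c : Fin k} {v v' : Val k} :
    StepLazy (.dec c) v v' ↔ v' = Function.update v c (v c - 1) := by
  rcases Nat.eq_zero_or_pos (v c) with hzero | hpos
  · have hupdate : Function.update v c (v c - 1) = v := by simp [hzero]
    rw [hupdate]
    simp [StepLazy, StepExact, hzero]
  · simp [StepLazy, StepExact, hpos, hpos.ne']

theorem stepLazy_ifz_iff {k : ℕ} {c : Fin k} {v v' : Val k} :
    StepLazy (.ifz c) v v' ↔ v c = 0 ∧ v' = v := by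
  simp [StepLazy, StepExact]

theorem ValLE.update {k : ℕ} {v w : Val k} (hvw : ValLE v w) (c : Fin k) {m n : ℕ} (hmn : m ≤ n) :
    ValLE (Function.update v c m) (Function.update w c n) :=
  update_le_update_iff.2 ⟨hmn, fun d _ => hvw d⟩

theorem StepLazy.exists_valLE {k : ℕ} {l : Instr k} {v w w' : Val k} (hw : StepLazy l w w')
    (hvw : ValLE v w) : ∃ v', StepLazy l v v' ∧ ValLE v' w' := by
  cases l with
  | inc c =>
    obtain rfl := stepLazy_inc_iff.1 hw
    exact ⟨_, stepLazy_inc_iff.2 rfl, hvw.update c (Nat.add_le_add_right (hvw c) 1)⟩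
  | dec c =>
    obtain rfl := stepLazy_dec_iff.1 hw
    exact ⟨_, stepLazy_dec_iff.2 rfl, hvw.update c (Nat.sub_le_sub_right (hvw c) 1)⟩
  | ifz c =>
    obtain ⟨hzero, rfl⟩ := stepLazy_ifz_iff.1 hw
    exact ⟨v, stepLazy_ifz_iff.2 ⟨Nat.eq_zero_of_le_zero (hzero ▸ hvw c), rfl⟩, hvw⟩

/-- The order `⟨q, v⟩ ≤ ⟨r, w⟩` on configurations, whose lifting to levels is `LevelLE`. -/
def ConfigLE {Q : Type} {k : ℕ} (x y : Q × Val k) : Prop :=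
  x.1 = y.1 ∧ ValLE x.2 y.2

namespace LevelLE

variable {Q : Type} {k : ℕ}

theorem singleton {x y : Q × Val k} (hxy : ConfigLE x y) : LevelLE {x} {y} := by
  rintro _ rfl
  exact ⟨y, rfl, hxy⟩

theorem insert {x y : Q × Val k} {G H : Set (Q × Val k)} (hxy : ConfigLE x y)
    (hGH : LevelLE G H) : LevelLE (insert x G) (insert y H) := by
  rintro z (rfl | hz)
  · exact ⟨y, Set.mem_insert y H, hxy⟩
  · obtain ⟨z', hz', hle⟩ := hGH z hz
    exact ⟨z', Set.mem_insert_of_mem y hz', hle⟩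

theorem mono_right {G H K : Set (Q × Val k)} (hGH : LevelLE G H) (hHK : H ⊆ K) :
    LevelLE G K := fun x hx =>
  let ⟨y, hy, hxy⟩ := hGH x hx
  ⟨y, hHK hy, hxy⟩

theorem biUnion {ι : Type*} {s : Set ι} {f : ι → Set (Q × Val k)} {H : Set (Q × Val k)}
    (h : ∀ i ∈ s, LevelLE (f i) H) : LevelLE (⋃ i ∈ s, f i) H := fun x hx =>
  let ⟨i, hi, hxi⟩ := Set.mem_iUnion₂.1 hx
  h i hi x hxi

end LevelLE

namespace ITCA

variable {A : Type} {C : ITCA A}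

/-- `C.Fires x S`: some transition of `C` lazily replaces the configuration `x` by the
configurations in `S`, two of them for a letter transition and one for an ε-transition. -/
def Fires (C : ITCA A) (x : C.Q × Val C.k) (S : Set (C.Q × Val C.k)) : Prop :=
  (∃ a l r₀ r₁ w₀ w₁, (x.1, a, l, r₀, r₁) ∈ C.δ ∧
    StepLazy l x.2 w₀ ∧ StepLazy l x.2 w₁ ∧ S = {(r₀, w₀), (r₁, w₁)}) ∨
  (∃ l r w, (x.1, l, r) ∈ C.δε ∧ StepLazy l x.2 w ∧ S = {(r, w)})

theorem levelStep_iff {G G' : Set (C.Q × Val C.k)} :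
    C.LevelStep G G' ↔ ∃ f : C.Q × Val C.k → Set (C.Q × Val C.k),
      (∀ x ∈ G, x.1 ∉ C.F → C.Fires x (f x)) ∧ G' = ⋃ x ∈ {y ∈ G | y.1 ∉ C.F}, f x :=
  Iff.rfl

theorem Fires.finite {x : C.Q × Val C.k} {S : Set (C.Q × Val C.k)} (h : C.Fires x S) :
    S.Finite := by
  obtain ⟨_, _, _, _, _, _, _, _, _, rfl⟩ | ⟨_, _, _, _, _, rfl⟩ := h <;> exact Set.toFinite _

theorem Fires.exists_levelLE {x y : C.Q × Val C.k} {T : Set (C.Q × Val C.k)} (hy : C.Fires y T)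
    (hxy : ConfigLE x y) : ∃ S, C.Fires x S ∧ LevelLE S T := by
  obtain ⟨hstate, hval⟩ := hxy
  obtain ⟨a, l, r₀, r₁, w₀, w₁, hδ, hw₀, hw₁, rfl⟩ | ⟨l, r, w, hδε, hw, rfl⟩ := hy
  · obtain ⟨v₀, hv₀, hle₀⟩ := hw₀.exists_valLE hval
    obtain ⟨v₁, hv₁, hle₁⟩ := hw₁.exists_valLE hval
    exact ⟨{(r₀, v₀), (r₁, v₁)}, .inl ⟨a, l, r₀, r₁, v₀, v₁, hstate ▸ hδ, hv₀, hv₁, rfl⟩,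
      .insert ⟨rfl, hle₀⟩ (.singleton ⟨rfl, hle₁⟩)⟩
  · obtain ⟨v, hv, hle⟩ := hw.exists_valLE hval
    exact ⟨{(r, v)}, .inr ⟨l, r, v, hstate ▸ hδε, hv, rfl⟩, .singleton ⟨rfl, hle⟩⟩

theorem LevelStep.finite {G G' : Set (C.Q × Val C.k)} (h : C.LevelStep G G') (hG : G.Finite) :
    G'.Finite := by
  obtain ⟨f, hf, rfl⟩ := levelStep_iff.1 h
  exact (hG.sep _).biUnion fun x hx => (hf x hx.1 hx.2).finite

end ITCA

theorem levelstep_downward_compatible_general {A : Type} (C : ITCA A)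
    (G H H' : Set (C.Q × Val C.k)) (hle : LevelLE G H) (hstep : C.LevelStep H H') :
    ∃ G' : Set (C.Q × Val C.k), C.LevelStep G G' ∧ LevelLE G' H' := by
  obtain ⟨f, hf, rfl⟩ := ITCA.levelStep_iff.1 hstep
  have hmatch : ∀ x ∈ {y ∈ G | y.1 ∉ C.F}, ∃ S, C.Fires x S ∧
      LevelLE S (⋃ y ∈ {y ∈ H | y.1 ∉ C.F}, f y) := by
    rintro x ⟨hxG, hxF⟩
    obtain ⟨y, hyH, hxy⟩ : ∃ y ∈ H, ConfigLE x y := hle x hxG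
    have hyF : y.1 ∉ C.F := hxy.1 ▸ hxF
    obtain ⟨S, hS, hSf⟩ := (hf y hyH hyF).exists_levelLE hxy
    exact ⟨S, hS, hSf.mono_right (Set.subset_biUnion_of_mem ⟨hyH, hyF⟩)⟩
  choose! g hfires hgle using hmatch
  exact ⟨_, ITCA.levelStep_iff.2 ⟨g, fun x hxG hxF => hfires x ⟨hxG, hxF⟩, rfl⟩, .biUnion hgle⟩

/-- `≼` is strongly downward-compatible with the level
transition relation of an ITCA: if `𝒢 ≼ ℋ` and `ℋ → ℋ'`, then `𝒢 → 𝒢'` for some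
level `𝒢' ≼ ℋ'`. -/
theorem levelstep_downward_compatible {A : Type} [Fintype A] (C : ITCA A)
    (G H H' : Set (C.Q × Val C.k)) (hG : G.Finite) (hH : H.Finite)
    (hle : LevelLE G H) (hstep : C.LevelStep H H') :
    ∃ G' : Set (C.Q × Val C.k), G'.Finite ∧ C.LevelStep G G' ∧ LevelLE G' H' :=
  let ⟨G', hstep', hle'⟩ := levelstep_downward_compatible_general C G H H' hle hstep
  ⟨G', hstep'.finite hG, hstep', hle'⟩
end

section
/- (Completeness of the data abstraction) Let 𝒜 = ⟨Σ, Q, q_I, F, δ⟩ be an ATRA₁. Whenever G is a configuration with abstraction Ḡ = v and the abstract transition v →_a^{Q_=} w₀, w₁ holds, there exist a datum E and configurations H₀, H₁ such that G →_a^E H₀, H₁, the abstractions satisfy H̄₀ = w₀ and H̄₁ = w₁, and Q_= = {q : ⟨q, E⟩ ∈ G} is the bundle of E in G. -/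
/-! ## The data abstraction for ATRA₁ configurations -/

/-- The bundle of a datum `D` in a configuration `G`. -/
def Bundle {Q : Type} (G : Set (Q × ℕ)) (D : ℕ) : Set Q := {q | (q, D) ∈ G}

/-- The abstraction of a configuration: for each (nonempty) `S ⊆ Q`, the number
of data whose bundle equals `S`. -/
noncomputable def AbstractOf {Q : Type} (G : Set (Q × ℕ)) : Set Q → ℕ :=
  fun S => Set.ncard {D : ℕ | Bundle G D = S}

/-- `⟨S, i⟩` is an abstract datum of the abstract configuration `v`. -/
def AbsDatum {Q : Type} (v : Set Q → ℕ) (S : Set Q) (i : ℕ) : Prop :=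
  S.Nonempty ∧ 1 ≤ i ∧ i ≤ v S

open Classical in
/-- The abstract transition relation `v →_a^{Q_=} w₀, w₁`. -/
def ATRA.AbsTrans {A : Type} (M : ATRA A) (a : A) (Qeq : Set M.Q)
    (v w0 w1 : Set M.Q → ℕ) : Prop :=
  (0 < v Qeq ∨ Qeq = ∅) ∧
  ∃ R' : Set M.Q → ℕ → Bool → Bool → Set M.Q,
    (∀ S i, AbsDatum v S i → ∀ q ∈ S,
      ∃ R : Bool → Bool → Set M.Q,
        (M.δ q a (decide (S = Qeq ∧ i = 1))).Sat R ∧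
        ∀ d u, R d u ⊆ R' S i d u) ∧
    (∀ d : Bool,
      ∃ Req : Set M.Q,
        R' Qeq 1 d false ⊆ Req ∧
        (∀ S i, AbsDatum v S i → R' S i d true ⊆ Req) ∧
        (∀ S' : Set M.Q, S'.Nonempty →
          Set.ncard {p : Set M.Q × ℕ |
              AbsDatum v p.1 p.2 ∧ p ≠ (Qeq, 1) ∧ R' p.1 p.2 d false = S'} +
            (if Req = S' then 1 else 0) ≤ (if d then w1 else w0) S'))

/-- An abstract run of `M` on a finite tree `t`. -/
structure ATRA.AbsRun {A : Type} (M : ATRA A) (t : BTree A) where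
  v : Node → Set M.Q → ℕ
  step : ∀ (n : Node) (a : A), t.label n = some a →
    ∃ Qeq : Set M.Q,
      M.AbsTrans a Qeq (v n) (v (n ++ [false])) (v (n ++ [true])) ∧
      (n = [] → M.qI ∈ Qeq)

/-- An abstract run is accepting iff at every leaf, `v_n(S) = 0` for all `S ⊄ F`. -/
def ATRA.AbsRun.Accepting {A : Type} {M : ATRA A} {t : BTree A}
    (ρ : M.AbsRun t) : Prop :=
  ∀ n, t.Leaf n → ∀ S : Set M.Q, ¬ S ⊆ M.F → ρ.v n S = 0

/-!
Number the data of `G` having a given bundle `S` by `1, …, Ḡ(S)`. This matches the data of `G` with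
the abstract data of `v`; the datum numbered `⟨Q_=, 1⟩` (a fresh one if `Q_= = ∅`) is `E`. In each
direction, the sets `R'` and `R_d^=` chosen by the abstract transition prescribe, through the
matching, a finite configuration containing all required successor threads, and the counting
condition says exactly that its abstraction is at most `w_d`. Since infinitely many data are unused,
fresh data can be added with prescribed bundles until the abstraction equals `w_d`.
-/

section Fibers

variable {α β γ : Type*}

theorem exists_bijOn_fiber_numbering (g : α → β) (t : Set β)
    (ht : ∀ b ∈ t, (g ⁻¹' {b}).Finite) :
    ∃ num : α → ℕ, Set.BijOn (fun x => (g x, num x)) (g ⁻¹' t)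
      {p | p.1 ∈ t ∧ p.2 ∈ Set.Icc 1 (g ⁻¹' {p.1}).ncard} := by
  have numbering (b : β) (hb : b ∈ t) : ∃ f : α → ℕ,
      Set.BijOn f (g ⁻¹' {b}) (Set.Icc 1 (g ⁻¹' {b}).ncard) :=
    (ht b hb).exists_bijOn_of_encard_eq <| by
      rw [← (ht b hb).cast_ncard_eq, ← (Set.finite_Icc _ _).cast_ncard_eq]
      simp
  choose! f hf using numbering
  refine ⟨fun x => f (g x) x, fun x hx => ⟨hx, (hf _ hx).mapsTo rfl⟩, ?_, ?_⟩
  · intro x hx y _ hxy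
    obtain ⟨hg, hnum⟩ := Prod.mk.inj hxy
    exact (hf _ hx).injOn rfl hg.symm (hnum.trans (by rw [hg]))
  · rintro ⟨b, i⟩ ⟨hb, hi⟩
    obtain ⟨x, rfl, rfl⟩ := (hf b hb).surjOn hi
    exact ⟨x, hb, rfl⟩

theorem preimage_extend {f : γ → α} (hf : Function.Injective f) (h : γ → β) (g : α → β)
    (s : Set β) :
    Function.extend f h g ⁻¹' s = f '' (h ⁻¹' s) ∪ (g ⁻¹' s \ Set.range f) := by
  ext x
  by_cases hx : x ∈ Set.range f
  · obtain ⟨c, rfl⟩ := hx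
    simp [hf.extend_apply, hf.eq_iff]
  · have hx' : x ∉ f '' (h ⁻¹' s) := fun h' => hx (Set.image_subset_range _ _ h')
    simp only [Set.mem_preimage, Function.extend_apply' _ _ _ hx, Set.mem_union, Set.mem_sdiff,
      hx, hx', not_false_eq_true, and_true, false_or]

theorem exists_eqOn_forall_ncard_fiber_eq [Infinite α] [Finite β] {g : α → β} {b₀ : β}
    (hg : {x | g x ≠ b₀}.Finite) {w : β → ℕ} (hw : ∀ b ≠ b₀, (g ⁻¹' {b}).ncard ≤ w b) :
    ∃ g' : α → β, Set.EqOn g' g {x | g x ≠ b₀} ∧ {x | g' x ≠ b₀}.Finite ∧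
      ∀ b ≠ b₀, (g' ⁻¹' {b}).ncard = w b := by
  let Missing := Σ b : β, Fin (w b - (g ⁻¹' {b}).ncard)
  have : Infinite ↥{x | g x ≠ b₀}ᶜ := hg.infinite_compl.to_subtype
  let e : Missing ↪ ↥{x | g x ≠ b₀}ᶜ := (Finite.equivFin Missing).toEmbedding.trans
    (Fin.valEmbedding.trans (Infinite.natEmbedding _))
  let fresh : Missing → α := fun m => e m
  have fresh_inj : Function.Injective fresh := Subtype.val_injective.comp e.injective
  have g_fresh (m : Missing) : g (fresh m) = b₀ := not_not.mp (e m).2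
  refine ⟨Function.extend fresh Sigma.fst g, fun x hx => ?_, ?_, fun b hb => ?_⟩
  · refine Function.extend_apply' _ _ _ ?_
    rintro ⟨m, rfl⟩
    exact hx (g_fresh m)
  · change (Function.extend fresh Sigma.fst g ⁻¹' {b₀}ᶜ).Finite
    rw [preimage_extend fresh_inj]
    exact (Set.toFinite _).union (hg.subset Set.sdiff_subset)
  · have fiber_disjoint : Disjoint (g ⁻¹' {b}) (Set.range fresh) := by
      rw [Set.disjoint_left]
      rintro _ hx ⟨m, rfl⟩
      exact hb (hx.symm.trans (g_fresh m))
    have fiber_finite : (g ⁻¹' {b}).Finite := hg.subset fun x (hx : g x = b) => hx.trans_ne hb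
    have ncard_fresh : (fresh '' (Sigma.fst ⁻¹' {b})).ncard = w b - (g ⁻¹' {b}).ncard := by
      rw [Set.ncard_image_of_injective _ fresh_inj, ← Set.range_sigmaMk, ← Set.image_univ,
        Set.ncard_image_of_injective _ sigma_mk_injective, Set.ncard_univ, Nat.card_fin]
    rw [preimage_extend fresh_inj, fiber_disjoint.sdiff_eq_left,
      Set.ncard_union_eq (fiber_disjoint.symm.mono_left (Set.image_subset_range _ _))
        (Set.toFinite _) fiber_finite, ncard_fresh]
    exact Nat.sub_add_cancel (hw b hb)

end Fibers

section Configurations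

variable {Q : Type} {G : Set (Q × ℕ)} {v : Set Q → ℕ} {idx : ℕ → Set Q × ℕ}

/-- The data carried by the threads of a configuration. -/
def dataOf (G : Set (Q × ℕ)) : Set ℕ := {D | (Bundle G D).Nonempty}

theorem dataOf_eq_image_snd (G : Set (Q × ℕ)) : dataOf G = Prod.snd '' G := by
  ext D
  simp [dataOf, Bundle, Set.Nonempty]

theorem finite_dataOf (hG : G.Finite) : (dataOf G).Finite :=
  dataOf_eq_image_snd G ▸ hG.image _

theorem finite_of_finite_dataOf [Finite Q] (hG : (dataOf G).Finite) : G.Finite :=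
  (Set.finite_univ.prod hG).subset fun p hp => ⟨trivial, p.1, hp⟩

theorem finite_setOf_bundle_eq (hG : G.Finite) {S : Set Q} (hS : S.Nonempty) :
    {D | Bundle G D = S}.Finite :=
  (finite_dataOf hG).subset fun _ (hD : Bundle G _ = S) => hD.symm.subst hS

theorem exists_superset_forall_abstractOf_eq [Finite Q] {K : Set (Q × ℕ)} (hK : K.Finite)
    {w : Set Q → ℕ} (hw : ∀ S : Set Q, S.Nonempty → AbstractOf K S ≤ w S) :
    ∃ H ⊇ K, H.Finite ∧ ∀ S : Set Q, S.Nonempty → AbstractOf H S = w S := by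
  have support_eq (B : ℕ → Set Q) : {D | B D ≠ ∅} = dataOf {p | p.1 ∈ B p.2} := by
    ext D
    exact Set.nonempty_iff_ne_empty.symm
  obtain ⟨B, hBK, hB, hBw⟩ := exists_eqOn_forall_ncard_fiber_eq (g := Bundle K) (b₀ := ∅)
    (support_eq (Bundle K) ▸ finite_dataOf hK)
    fun S hS => hw S (Set.nonempty_iff_ne_empty.mpr hS)
  refine ⟨{p | p.1 ∈ B p.2}, fun p hp => ?_, finite_of_finite_dataOf (support_eq B ▸ hB),
    fun S hS => hBw S hS.ne_empty⟩
  have hK_ne : Bundle K p.2 ≠ ∅ := Set.nonempty_iff_ne_empty.mp ⟨p.1, hp⟩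
  rw [Set.mem_ofPred_eq, hBK hK_ne]
  exact hp

/-- `IsIndexing G v idx` says that `idx` matches the data of the configuration `G` bijectively with
the abstract data `⟨S, i⟩` of `v`, where `S` is the bundle of the datum. Nothing is required of the
values of `idx` outside `dataOf G`. -/
structure IsIndexing (G : Set (Q × ℕ)) (v : Set Q → ℕ) (idx : ℕ → Set Q × ℕ) : Prop where
  fst_eq : ∀ D ∈ dataOf G, (idx D).1 = Bundle G D
  bijOn : Set.BijOn idx (dataOf G) {p | AbsDatum v p.1 p.2}

theorem exists_isIndexing (hG : G.Finite)
    (hv : ∀ S : Set Q, S.Nonempty → AbstractOf G S = v S) : ∃ idx, IsIndexing G v idx := by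
  obtain ⟨num, hnum⟩ := exists_bijOn_fiber_numbering (Bundle G) {S | S.Nonempty}
    fun S hS => finite_setOf_bundle_eq hG hS
  have absData_eq : {p : Set Q × ℕ | AbsDatum v p.1 p.2} =
      {p | p.1 ∈ {S | S.Nonempty} ∧ p.2 ∈ Set.Icc 1 (Bundle G ⁻¹' {p.1}).ncard} :=
    Set.ext fun p => and_congr_right fun hS => by rw [← hv p.1 hS]; rfl
  exact ⟨fun D => (Bundle G D, num D), fun _ _ => rfl, absData_eq ▸ hnum⟩

theorem IsIndexing.exists_bundle_eq (hidx : IsIndexing G v idx) (hG : G.Finite)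
    {Qeq : Set Q} (hQeq : 0 < v Qeq ∨ Qeq = ∅) :
    ∃ E, Bundle G E = Qeq ∧ ∀ D ∈ dataOf G, idx D = (Qeq, 1) ↔ D = E := by
  obtain rfl | hne := Qeq.eq_empty_or_nonempty
  · obtain ⟨E, hE⟩ := (finite_dataOf hG).infinite_compl.nonempty
    refine ⟨E, Set.not_nonempty_iff_eq_empty.mp hE, fun D hD => iff_of_false ?_ ?_⟩
    · intro h
      exact hD.ne_empty ((hidx.fst_eq D hD).symm.trans (congrArg Prod.fst h))
    · rintro rfl
      exact hE hD
  · have hQeq₁ : (Qeq, 1) ∈ {p : Set Q × ℕ | AbsDatum v p.1 p.2} :=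
      ⟨hne, le_rfl, hQeq.resolve_right hne.ne_empty⟩
    obtain ⟨E, hE, hEQ⟩ := hidx.bijOn.surjOn hQeq₁
    refine ⟨E, (hidx.fst_eq E hE).symm.trans (congrArg Prod.fst hEQ), fun D hD => ?_⟩
    rw [← hEQ, hidx.bijOn.injOn.eq_iff hD hE]

open Classical in
/-- The configuration in which `E` has bundle `Req` and every other datum `D` of `G` has bundle
`N D`: the least successor of `G` in one direction, for a transition at datum `E` that collects
`Req` at `E` and sends the threads holding `D` to the states `N D` without updating the register. -/
def leastSuccessor (G : Set (Q × ℕ)) (E : ℕ) (Req : Set Q) (N : ℕ → Set Q) : Set (Q × ℕ) :=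
  {p | p.1 ∈ if p.2 = E then Req else if p.2 ∈ dataOf G then N p.2 else ∅}

section LeastSuccessor

variable {E : ℕ} {Req : Set Q} {N : ℕ → Set Q}

theorem bundle_leastSuccessor_self : Bundle (leastSuccessor G E Req N) E = Req := by
  simp [Bundle, leastSuccessor]

theorem bundle_leastSuccessor_of_mem {D : ℕ} (hD : D ∈ dataOf G) (hDE : D ≠ E) :
    Bundle (leastSuccessor G E Req N) D = N D := by
  simp [Bundle, leastSuccessor, hD, hDE]

theorem dataOf_leastSuccessor_subset : dataOf (leastSuccessor G E Req N) ⊆ insert E (dataOf G) := by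
  rintro D ⟨q, hq⟩
  by_contra h
  obtain ⟨hDE, hD⟩ := not_or.mp h
  simp [Bundle, leastSuccessor, hDE, hD] at hq

open Classical in
theorem abstractOf_leastSuccessor_le (hG : G.Finite) {S : Set Q} (hS : S.Nonempty) :
    AbstractOf (leastSuccessor G E Req N) S ≤
      {D ∈ dataOf G | D ≠ E ∧ N D = S}.ncard + if Req = S then 1 else 0 := by
  have fiber_subset : {D | Bundle (leastSuccessor G E Req N) D = S} ⊆
      {D ∈ dataOf G | D ≠ E ∧ N D = S} ∪ {D | D = E ∧ Req = S} := by
    intro D (hDS : Bundle _ D = S)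
    by_cases hDE : D = E
    · subst hDE
      exact Or.inr ⟨rfl, bundle_leastSuccessor_self.symm.trans hDS⟩
    · have hD : D ∈ dataOf G :=
        (dataOf_leastSuccessor_subset (hDS.symm ▸ hS : (Bundle _ D).Nonempty)).resolve_left hDE
      exact Or.inl ⟨hD, hDE, (bundle_leastSuccessor_of_mem hD hDE).symm.trans hDS⟩
  have hfin : {D | D = E ∧ Req = S}.Finite := (Set.finite_singleton E).subset fun _ h => h.1
  calc AbstractOf (leastSuccessor G E Req N) S
    _ ≤ ({D ∈ dataOf G | D ≠ E ∧ N D = S} ∪ {D | D = E ∧ Req = S}).ncard :=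
        Set.ncard_le_ncard fiber_subset (((finite_dataOf hG).sep _).union hfin)
    _ ≤ {D ∈ dataOf G | D ≠ E ∧ N D = S}.ncard + {D | D = E ∧ Req = S}.ncard :=
        Set.ncard_union_le ..
    _ = _ := by split_ifs with h <;> simp [h]

end LeastSuccessor

theorem IsIndexing.ncard_sep_eq (hidx : IsIndexing G v idx) (P : Set Q × ℕ → Prop) :
    {D ∈ dataOf G | P (idx D)}.ncard = {p : Set Q × ℕ | AbsDatum v p.1 p.2 ∧ P p}.ncard := by
  rw [← (hidx.bijOn.injOn.mono (Set.sep_subset _ _)).ncard_image]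
  congr 1
  ext p
  constructor
  · rintro ⟨D, ⟨hD, hP⟩, rfl⟩
    exact ⟨hidx.bijOn.mapsTo hD, hP⟩
  · rintro ⟨hp, hP⟩
    obtain ⟨D, hD, rfl⟩ := hidx.bijOn.surjOn hp
    exact ⟨D, ⟨hD, hP⟩, rfl⟩

open Classical in
theorem IsIndexing.exists_successor [Finite Q] (hidx : IsIndexing G v idx) (hG : G.Finite)
    {Qeq : Set Q} {E : ℕ}
    (hE : ∀ D ∈ dataOf G, idx D = (Qeq, 1) ↔ D = E) {U N : Set Q × ℕ → Set Q} {Req : Set Q}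
    (hN : N (Qeq, 1) ⊆ Req) (hU : ∀ p : Set Q × ℕ, AbsDatum v p.1 p.2 → U p ⊆ Req)
    {w : Set Q → ℕ} (hw : ∀ S : Set Q, S.Nonempty →
      {p : Set Q × ℕ | AbsDatum v p.1 p.2 ∧ p ≠ (Qeq, 1) ∧ N p = S}.ncard +
        (if Req = S then 1 else 0) ≤ w S) :
    ∃ H : Set (Q × ℕ), H.Finite ∧ (∀ S : Set Q, S.Nonempty → AbstractOf H S = w S) ∧
      ∀ D ∈ dataOf G, U (idx D) ⊆ Bundle H E ∧ N (idx D) ⊆ Bundle H D := by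
  let K := leastSuccessor G E Req (N ∘ idx)
  have hK : K.Finite := finite_of_finite_dataOf
    (((finite_dataOf hG).insert E).subset dataOf_leastSuccessor_subset)
  have count_eq (S : Set Q) : {D ∈ dataOf G | D ≠ E ∧ N (idx D) = S}.ncard =
      {p : Set Q × ℕ | AbsDatum v p.1 p.2 ∧ p ≠ (Qeq, 1) ∧ N p = S}.ncard := by
    rw [← hidx.ncard_sep_eq fun p => p ≠ (Qeq, 1) ∧ N p = S]
    congr 1
    ext D
    exact and_congr_right fun hD => and_congr_left fun _ => not_congr (hE D hD).symm
  obtain ⟨H, hKH, hH, hHw⟩ := exists_superset_forall_abstractOf_eq hK fun S hS =>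
    (abstractOf_leastSuccessor_le hG hS).trans ((count_eq S).symm ▸ hw S hS)
  have bundle_subset (D : ℕ) : Bundle K D ⊆ Bundle H D := fun _ hq => hKH hq
  have Req_subset : Req ⊆ Bundle H E :=
    bundle_leastSuccessor_self.symm.trans_subset (bundle_subset E)
  refine ⟨H, hH, hHw, fun D hD => ⟨(hU _ (hidx.bijOn.mapsTo hD)).trans Req_subset, ?_⟩⟩
  by_cases hDE : D = E
  · rw [(hE D hD).mpr hDE, hDE]
    exact hN.trans Req_subset
  · exact (bundle_leastSuccessor_of_mem hD hDE).symm.trans_subset (bundle_subset D)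

end Configurations

open Classical in
theorem ATRA.trans_of_isIndexing {A : Type} (M : ATRA A) {a : A} {G : Set (M.Q × ℕ)}
    {v : Set M.Q → ℕ} {idx : ℕ → Set M.Q × ℕ} (hidx : IsIndexing G v idx) {Qeq : Set M.Q} {E : ℕ}
    (hE : ∀ D ∈ dataOf G, idx D = (Qeq, 1) ↔ D = E)
    {R' : Set M.Q → ℕ → Bool → Bool → Set M.Q}
    (hR' : ∀ S i, AbsDatum v S i → ∀ q ∈ S, ∃ R : Bool → Bool → Set M.Q,
      (M.δ q a (decide (S = Qeq ∧ i = 1))).Sat R ∧ ∀ d u, R d u ⊆ R' S i d u)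
    {H : Bool → Set (M.Q × ℕ)}
    (hH : ∀ d, ∀ D ∈ dataOf G, R' (idx D).1 (idx D).2 d true ⊆ Bundle (H d) E ∧
      R' (idx D).1 (idx D).2 d false ⊆ Bundle (H d) D) :
    M.Trans a E G (H false) (H true) := by
  intro q D hqD
  have hD : D ∈ dataOf G := ⟨q, hqD⟩
  obtain ⟨R, hsat, hRR'⟩ := hR' _ _ (hidx.bijOn.mapsTo hD) q (hidx.fst_eq D hD ▸ hqD)
  have guard_eq : decide ((idx D).1 = Qeq ∧ (idx D).2 = 1) = decide (D = E) :=
    decide_eq_decide.mpr (Prod.ext_iff.symm.trans (hE D hD))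
  have ite_eq (d : Bool) : (if d then H true else H false) = H d := by cases d <;> rfl
  refine ⟨R, guard_eq ▸ hsat, fun d => ?_⟩
  rw [ite_eq]
  exact ⟨(hRR' d true).trans (hH d D hD).1, (hRR' d false).trans (hH d D hD).2⟩

theorem abstraction_complete_general {A : Type} (M : ATRA A) (a : A)
    (G : Set (M.Q × ℕ)) (hG : G.Finite) (Qeq : Set M.Q)
    (v w0 w1 : Set M.Q → ℕ)
    (hv : ∀ S : Set M.Q, S.Nonempty → AbstractOf G S = v S)
    (habs : M.AbsTrans a Qeq v w0 w1) :
    ∃ (E : ℕ) (H0 H1 : Set (M.Q × ℕ)), H0.Finite ∧ H1.Finite ∧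
      M.Trans a E G H0 H1 ∧
      (∀ S : Set M.Q, S.Nonempty → AbstractOf H0 S = w0 S) ∧
      (∀ S : Set M.Q, S.Nonempty → AbstractOf H1 S = w1 S) ∧
      Bundle G E = Qeq := by
  obtain ⟨hQeq, R', hR', hdir⟩ := habs
  have : Finite M.Q := M.fin
  obtain ⟨idx, hidx⟩ := exists_isIndexing hG hv
  obtain ⟨E, hbundle, hE⟩ := hidx.exists_bundle_eq hG hQeq
  have hsucc (d : Bool) : ∃ H : Set (M.Q × ℕ), H.Finite ∧
      (∀ S : Set M.Q, S.Nonempty → AbstractOf H S = (if d then w1 else w0) S) ∧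
      ∀ D ∈ dataOf G, R' (idx D).1 (idx D).2 d true ⊆ Bundle H E ∧
        R' (idx D).1 (idx D).2 d false ⊆ Bundle H D := by
    obtain ⟨Req, hN, hU, hw⟩ := hdir d
    exact hidx.exists_successor hG hE (U := fun p => R' p.1 p.2 d true)
      (N := fun p => R' p.1 p.2 d false) hN (fun p => hU p.1 p.2) hw
  choose H hHfin hHw hH using hsucc
  exact ⟨E, H false, H true, hHfin false, hHfin true, M.trans_of_isIndexing hidx hE hR' hH,
    hHw false, hHw true, hbundle⟩

/-- (Completeness of the data abstraction) If `Ḡ = v` and the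
abstract transition `v →_a^{Q_=} w₀, w₁` holds, then there exist a datum `E` and
configurations `H₀, H₁` with `G →_a^E H₀, H₁`, `H̄₀ = w₀`, `H̄₁ = w₁`, and `Q_=`
the bundle of `E` in `G`. -/
theorem abstraction_complete {A : Type} [Fintype A] (M : ATRA A) (a : A)
    (G : Set (M.Q × ℕ)) (hG : G.Finite) (Qeq : Set M.Q)
    (v w0 w1 : Set M.Q → ℕ)
    (hv : ∀ S : Set M.Q, S.Nonempty → AbstractOf G S = v S)
    (habs : M.AbsTrans a Qeq v w0 w1) :
    ∃ (E : ℕ) (H0 H1 : Set (M.Q × ℕ)), H0.Finite ∧ H1.Finite ∧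
      M.Trans a E G H0 H1 ∧
      (∀ S : Set M.Q, S.Nonempty → AbstractOf H0 S = w0 S) ∧
      (∀ S : Set M.Q, S.Nonempty → AbstractOf H1 S = w1 S) ∧
      Bundle G E = Qeq :=
  abstraction_complete_general M a G hG Qeq v w0 w1 hv habs
end
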